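/- There is a ∗-algebra isomorphism θ: U_q(su_{1,1})⋉Ô(SU_q(1,1)) → Ô(SU_q(1,1))⋊U_q(su_{1,1}) determined on generators by θ(a) = a, θ(b) = −qc, θ(c) = −q⁻¹b, θ(d) = d, θ(E) = F, θ(F) = E, θ(K) = K⁻¹ (hence θ(b⁻¹) = −q⁻¹c⁻¹, θ(c⁻¹) = −qb⁻¹, θ(K⁻¹) = K). -/

import Mathlib

/-- The relations common to both cross product ∗-algebras built from
`Ô(SU_q(1,1))` and `U_q(su_{1,1})`, on elements `a, b, c, d, b', c', E, F, K, K'`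
(`b', c', K'` playing the roles of `b⁻¹, c⁻¹, K⁻¹`), including the involution conditions
`a* = d`, `b* = qc`, `E* = -F`, `K* = K`. -/
def SUCommonRel {A : Type} [Ring A] [Algebra ℂ A] [StarRing A]
    (q : ℝ) (a b c d b' c' E F K K' : A) : Prop :=
  star a = d ∧ star b = (q : ℂ) • c ∧ star E = -F ∧ star K = K ∧ star K' = K' ∧
  a * b = (q : ℂ) • (b * a) ∧ a * c = (q : ℂ) • (c * a) ∧
  b * d = (q : ℂ) • (d * b) ∧ c * d = (q : ℂ) • (d * c) ∧
  b * c = c * b ∧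
  a * d - (q : ℂ) • (b * c) = 1 ∧ d * a - (q : ℂ)⁻¹ • (b * c) = 1 ∧
  b * b' = 1 ∧ b' * b = 1 ∧ c * c' = 1 ∧ c' * c = 1 ∧
  K * K' = 1 ∧ K' * K = 1 ∧
  K * E = (q : ℂ) • (E * K) ∧ K * F = (q : ℂ)⁻¹ • (F * K) ∧
  E * F - F * E = ((q : ℂ) - (q : ℂ)⁻¹)⁻¹ • (K * K - K' * K')

/-- The additional cross relations of the left cross product ∗-algebra
`U_q(su_{1,1}) ⋉ Ô(SU_q(1,1))`. -/
def SULeftRel {A : Type} [Ring A] [Algebra ℂ A] [StarRing A]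
    (q : ℝ) (a b c d b' c' E F K K' : A) : Prop :=
  SUCommonRel q a b c d b' c' E F K K' ∧
  a * K = (Real.sqrt q : ℂ)⁻¹ • (K * a) ∧
  a * E = (Real.sqrt q : ℂ)⁻¹ • (E * a) ∧
  a * F = (Real.sqrt q : ℂ)⁻¹ • (F * a) + K' * c ∧
  b * K = (Real.sqrt q : ℂ)⁻¹ • (K * b) ∧
  b * E = (Real.sqrt q : ℂ)⁻¹ • (E * b) ∧
  b * F = (Real.sqrt q : ℂ)⁻¹ • (F * b) + K' * d ∧
  c * K = (Real.sqrt q : ℂ) • (K * c) ∧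
  c * E = (Real.sqrt q : ℂ) • (E * c) + K' * a ∧
  c * F = (Real.sqrt q : ℂ) • (F * c) ∧
  d * K = (Real.sqrt q : ℂ) • (K * d) ∧
  d * E = (Real.sqrt q : ℂ) • (E * d) + K' * b ∧
  d * F = (Real.sqrt q : ℂ) • (F * d)

/-- The additional cross relations of the right cross product ∗-algebra
`Ô(SU_q(1,1)) ⋊ U_q(su_{1,1})`. -/
def SURightRel {B : Type} [Ring B] [Algebra ℂ B] [StarRing B]
    (q : ℝ) (a b c d b' c' E F K K' : B) : Prop :=
  SUCommonRel q a b c d b' c' E F K K' ∧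
  K * a = (Real.sqrt q : ℂ)⁻¹ • (a * K) ∧
  E * a = (Real.sqrt q : ℂ) • (a * E) + b * K ∧
  F * a = (Real.sqrt q : ℂ) • (a * F) ∧
  K * b = (Real.sqrt q : ℂ) • (b * K) ∧
  E * b = (Real.sqrt q : ℂ)⁻¹ • (b * E) ∧
  F * b = (Real.sqrt q : ℂ)⁻¹ • (b * F) + a * K ∧
  K * c = (Real.sqrt q : ℂ)⁻¹ • (c * K) ∧
  E * c = (Real.sqrt q : ℂ) • (c * E) + d * K ∧
  F * c = (Real.sqrt q : ℂ) • (c * F) ∧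
  K * d = (Real.sqrt q : ℂ) • (d * K) ∧
  E * d = (Real.sqrt q : ℂ)⁻¹ • (d * E) ∧
  F * d = (Real.sqrt q : ℂ)⁻¹ • (d * F) + c * K

/-- `A` with the elements `a, b, c, d, b', c', E, F, K, K'` is the universal unital
ℂ-∗-algebra subject to the relations of `U_q(su_{1,1}) ⋉ Ô(SU_q(1,1))`. -/
def IsUniversalSULeft (q : ℝ) (A : Type) [Ring A] [Algebra ℂ A] [StarRing A]
    [StarModule ℂ A] (a b c d b' c' E F K K' : A) : Prop :=
  SULeftRel q a b c d b' c' E F K K' ∧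
  ∀ (B : Type) [Ring B] [Algebra ℂ B] [StarRing B] [StarModule ℂ B],
    ∀ a₁ b₁ c₁ d₁ b₁' c₁' E₁ F₁ L L' : B, SULeftRel q a₁ b₁ c₁ d₁ b₁' c₁' E₁ F₁ L L' →
      ∃! φ : A →⋆ₐ[ℂ] B,
        φ a = a₁ ∧ φ b = b₁ ∧ φ c = c₁ ∧ φ d = d₁ ∧ φ b' = b₁' ∧ φ c' = c₁' ∧
        φ E = E₁ ∧ φ F = F₁ ∧ φ K = L ∧ φ K' = L'

/-- `B` with the elements `a, b, c, d, b', c', E, F, K, K'` is the universal unital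
ℂ-∗-algebra subject to the relations of `Ô(SU_q(1,1)) ⋊ U_q(su_{1,1})`. -/
def IsUniversalSURight (q : ℝ) (B : Type) [Ring B] [Algebra ℂ B] [StarRing B]
    [StarModule ℂ B] (a b c d b' c' E F K K' : B) : Prop :=
  SURightRel q a b c d b' c' E F K K' ∧
  ∀ (C : Type) [Ring C] [Algebra ℂ C] [StarRing C] [StarModule ℂ C],
    ∀ a₁ b₁ c₁ d₁ b₁' c₁' E₁ F₁ L L' : C, SURightRel q a₁ b₁ c₁ d₁ b₁' c₁' E₁ F₁ L L' →
      ∃! φ : B →⋆ₐ[ℂ] C,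
        φ a = a₁ ∧ φ b = b₁ ∧ φ c = c₁ ∧ φ d = d₁ ∧ φ b' = b₁' ∧ φ c' = c₁' ∧
        φ E = E₁ ∧ φ F = F₁ ∧ φ K = L ∧ φ K' = L'

/-!
The assignment `τ : (a, b, c, d, E, F, K) ↦ (a, -qc, -q⁻¹b, d, F, E, K⁻¹)` on generators is an
involution that commutes with ∗-homomorphisms and exchanges families satisfying the relations of the
left cross product with families satisfying those of the right one. Applied to the generators of
either algebra it therefore induces, by universality, ∗-homomorphisms in both directions, and these
are mutually inverse because `τ ∘ τ = id`.
-/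

section QCommutation

/-- `x` and `y` commute up to the scalar `r`, the form of most of the defining relations. -/
def QCommute {R A : Type*} [Mul A] [SMul R A] (r : R) (x y : A) : Prop :=
  x * y = r • (y * x)

variable {R A : Type*} [CommSemiring R] {r t u v : R}

namespace QCommute

section Semiring

variable [Semiring A] [Algebra R A] {k k' x y : A}

theorem symm (h : QCommute r x y) (htr : t * r = 1) : QCommute t y x := by
  rw [QCommute, h, smul_smul, htr, one_smul]

theorem swap_inv_left (h : QCommute r k x) (hkk' : k * k' = 1) (hk'k : k' * k = 1) :
    QCommute r x k' :=
  calc x * k' = k' * (k * x) * k' := by rw [← mul_assoc k' k x, hk'k, one_mul]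
    _ = r • (k' * x * (k * k')) := by
      rw [h, mul_smul_comm, smul_mul_assoc]
      simp only [mul_assoc]
    _ = r • (k' * x) := by rw [hkk', mul_one]

theorem swap_inv_right (h : QCommute r x k) (hkk' : k * k' = 1) (hk'k : k' * k = 1) :
    QCommute r k' x :=
  calc k' * x = k' * (x * k) * k' := by rw [mul_assoc, mul_assoc, hkk', mul_one]
    _ = r • (k' * k * (x * k')) := by
      rw [h, mul_smul_comm, smul_mul_assoc]
      simp only [mul_assoc]
    _ = r • (x * k') := by rw [hk'k, one_mul]

end Semiring

variable [Ring A] [Algebra R A] {k w x y : A}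

theorem neg_smul_left (h : QCommute r x y) (t : R) : QCommute r (-(t • x)) y := by
  rw [QCommute, neg_mul, mul_neg, smul_mul_assoc, mul_smul_comm, h, smul_neg, smul_comm]

theorem neg_smul_right (h : QCommute r x y) (t : R) : QCommute r x (-(t • y)) := by
  rw [QCommute, neg_mul, mul_neg, smul_mul_assoc, mul_smul_comm, h, smul_neg, smul_comm]

theorem swap_mul_eq_add (hkw : QCommute t k w) (h : x * y = r • (y * x) + k * w)
    (htr : t * r = 1) (htt : t * t = u) : y * x = t • (x * y) - u • (w * k) := by
  rw [h, hkw, smul_add, smul_smul, smul_smul, htr, htt, one_smul, add_sub_cancel_right]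

end QCommute

variable [Ring A] [Algebra R A] {x y z : A}

theorem mul_neg_smul_eq_add (h : y * x = t • (x * y) - u • z) (hvu : v * u = 1) :
    y * -(v • x) = t • (-(v • x) * y) + z := by
  rw [mul_neg, neg_mul, mul_smul_comm, smul_mul_assoc, h, smul_sub, smul_smul v u, hvu, one_smul,
    smul_neg, smul_comm, neg_sub', sub_neg_eq_add]

theorem neg_smul_mul_eq_add (h : x * y = t • (y * x) - u • z) (hvu : v * u = 1) :
    -(v • x) * y = t • (y * -(v • x)) + z := by
  rw [mul_neg, neg_mul, mul_smul_comm, smul_mul_assoc, h, smul_sub, smul_smul v u, hvu, one_smul,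
    smul_neg, smul_comm, neg_sub', sub_neg_eq_add]

theorem neg_smul_mul_neg_smul (htu : t * u = 1) (x y : A) : -(t • x) * -(u • y) = x * y := by
  rw [neg_mul_neg, smul_mul_smul_comm, htu, one_smul]

end QCommutation

section UniversalFamily

universe u

variable {R ι : Type*} [CommSemiring R] [Star R]

/-- The family `x` satisfies the relations `P` and is universal among families in ∗-algebras that
do. Here `P` is any property of `ι`-indexed families in ∗-algebras over `R`. -/
def IsUniversalFamily
    (P : ∀ (C : Type u) [Ring C] [Algebra R C] [StarRing C], (ι → C) → Prop)
    {A : Type u} [Ring A] [Algebra R A] [StarRing A] (x : ι → A) : Prop :=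
  P A x ∧ ∀ (C : Type u) [Ring C] [Algebra R C] [StarRing C] [StarModule R C] (y : ι → C),
    P C y → ∃! φ : A →⋆ₐ[R] C, φ ∘ x = y

variable {P Q : ∀ (C : Type u) [Ring C] [Algebra R C] [StarRing C], (ι → C) → Prop}
  {A B : Type u} [Ring A] [Algebra R A] [StarRing A] [StarModule R A]
  [Ring B] [Algebra R B] [StarRing B] [StarModule R B]

theorem IsUniversalFamily.eq_id {x : ι → A} (hx : IsUniversalFamily P x) {φ : A →⋆ₐ[R] A}
    (hφ : φ ∘ x = x) : φ = StarAlgHom.id R A :=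
  (hx.2 A x hx.1).unique hφ rfl

theorem IsUniversalFamily.exists_starAlgEquiv {x x' : ι → A} {y y' : ι → B}
    (hx : IsUniversalFamily P x) (hy : IsUniversalFamily Q y) (hx' : Q A x') (hy' : P B y')
    (hxy : ∀ f : A →⋆ₐ[R] B, f ∘ x = y' → f ∘ x' = y)
    (hyx : ∀ g : B →⋆ₐ[R] A, g ∘ y = x' → g ∘ y' = x) :
    ∃ θ : A ≃⋆ₐ[R] B, θ ∘ x = y' := by
  obtain ⟨f, hf, -⟩ := hx.2 B y' hy'
  obtain ⟨g, hg, -⟩ := hy.2 A x' hx'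
  have hgf : g.comp f = StarAlgHom.id R A :=
    hx.eq_id (by rw [StarAlgHom.coe_comp, Function.comp_assoc, hf, hyx g hg])
  have hfg : f.comp g = StarAlgHom.id R B :=
    hy.eq_id (by rw [StarAlgHom.coe_comp, Function.comp_assoc, hg, hxy f hf])
  exact ⟨StarAlgEquiv.ofStarAlgHom f g hgf hfg, hf⟩

end UniversalFamily

section SquareRoot

variable {q : ℝ}

theorem ofReal_sqrt_ne_zero (hq : 0 < q) : (Real.sqrt q : ℂ) ≠ 0 :=
  Complex.ofReal_ne_zero.2 (Real.sqrt_pos.2 hq).ne'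

theorem ofReal_sqrt_mul_self (hq : 0 ≤ q) : (Real.sqrt q : ℂ) * Real.sqrt q = q := by
  rw [← Complex.ofReal_mul, Real.mul_self_sqrt hq]

theorem inv_ofReal_sqrt_mul_self (hq : 0 ≤ q) :
    (Real.sqrt q : ℂ)⁻¹ * (Real.sqrt q : ℂ)⁻¹ = (q : ℂ)⁻¹ := by
  rw [← mul_inv, ofReal_sqrt_mul_self hq]

end SquareRoot

theorem star_eq_inv_smul_of_star_eq_smul {M : Type*} [AddCommMonoid M] [StarAddMonoid M]
    [Module ℂ M] [StarModule ℂ M] {q : ℝ} (hq : q ≠ 0) {x y : M} (h : star x = (q : ℂ) • y) :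
    star y = (q : ℂ)⁻¹ • x := by
  rw [eq_inv_smul_iff₀ (Complex.ofReal_ne_zero.2 hq), ← star_star x, h, star_smul,
    Complex.star_def, Complex.conj_ofReal]

section Relations

variable {A : Type} [Ring A] [Algebra ℂ A] [StarRing A] [StarModule ℂ A] {q : ℝ}
  {a b c d b' c' E F K K' : A}

theorem SUCommonRel.twist (hq : q ≠ 0) (h : SUCommonRel q a b c d b' c' E F K K') :
    SUCommonRel q a (-((q : ℂ) • c)) (-((q : ℂ)⁻¹ • b)) d (-((q : ℂ)⁻¹ • c'))
      (-((q : ℂ) • b')) F E K' K := by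
  obtain ⟨star_a, star_b, star_E, star_K, star_K', ab, ac, bd, cd, bc, ad, da,
    bb', b'b, cc', c'c, KK', K'K, KE, KF, EF⟩ := h
  have hq' : (q : ℂ) ≠ 0 := Complex.ofReal_ne_zero.2 hq
  have q_mul_inv : (q : ℂ) * (q : ℂ)⁻¹ = 1 := mul_inv_cancel₀ hq'
  have inv_mul_q : (q : ℂ)⁻¹ * (q : ℂ) = 1 := inv_mul_cancel₀ hq'
  have star_c : star c = (q : ℂ)⁻¹ • b := star_eq_inv_smul_of_star_eq_smul hq star_b
  have star_twist_b : star (-((q : ℂ) • c)) = (q : ℂ) • -((q : ℂ)⁻¹ • b) := by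
    rw [star_neg, star_smul, star_c, Complex.star_def, Complex.conj_ofReal, smul_neg]
  have star_F : star F = -E := by rw [← neg_eq_iff_eq_neg, ← star_neg, ← star_E, star_star]
  have twist_bc : -((q : ℂ) • c) * -((q : ℂ)⁻¹ • b) = b * c :=
    (neg_smul_mul_neg_smul q_mul_inv c b).trans bc.symm
  have twist_cb : -((q : ℂ)⁻¹ • b) * -((q : ℂ) • c) = b * c :=
    neg_smul_mul_neg_smul inv_mul_q b c
  have K'F : QCommute (q : ℂ) K' F := (QCommute.swap_inv_left KF KK' K'K).symm q_mul_inv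
  have K'E : QCommute (q : ℂ)⁻¹ K' E := (QCommute.swap_inv_left KE KK' K'K).symm inv_mul_q
  refine ⟨star_a, star_twist_b, star_F, star_K', star_K,
    QCommute.neg_smul_right ac _, QCommute.neg_smul_right ab _,
    QCommute.neg_smul_left cd _, QCommute.neg_smul_left bd _,
    twist_bc.trans twist_cb.symm, twist_bc ▸ ad, twist_bc ▸ da,
    (neg_smul_mul_neg_smul q_mul_inv c c').trans cc',
    (neg_smul_mul_neg_smul inv_mul_q c' c).trans c'c,
    (neg_smul_mul_neg_smul inv_mul_q b b').trans bb',
    (neg_smul_mul_neg_smul q_mul_inv b' b).trans b'b,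
    K'K, KK', K'F, K'E, ?_⟩
  rw [← neg_sub, EF, ← smul_neg, neg_sub]

theorem SULeftRel.rightRel_twist (hq : 0 < q) (h : SULeftRel q a b c d b' c' E F K K') :
    SURightRel q a (-((q : ℂ) • c)) (-((q : ℂ)⁻¹ • b)) d (-((q : ℂ)⁻¹ • c'))
      (-((q : ℂ) • b')) F E K' K := by
  refine ⟨h.1.twist hq.ne', ?_⟩
  obtain ⟨⟨-, -, -, -, -, -, -, -, -, -, -, -, -, -, -, -, KK', K'K, -, -, -⟩,
    aK, aE, aF, bK, bE, bF, cK, cE, cF, dK, dE, dF⟩ := h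
  have hq' : (q : ℂ) ≠ 0 := Complex.ofReal_ne_zero.2 hq.ne'
  have s_mul_inv := mul_inv_cancel₀ (ofReal_sqrt_ne_zero hq)
  have inv_mul_s := inv_mul_cancel₀ (ofReal_sqrt_ne_zero hq)
  have s_sq := ofReal_sqrt_mul_self hq.le
  have inv_sq := inv_ofReal_sqrt_mul_self hq.le
  have K'a := QCommute.swap_inv_right aK KK' K'K
  have K'b := QCommute.swap_inv_right bK KK' K'K
  have K'c := QCommute.swap_inv_right cK KK' K'K
  have K'd := QCommute.swap_inv_right dK KK' K'K
  have Fa := K'c.swap_mul_eq_add aF s_mul_inv s_sq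
  have Fb := K'd.swap_mul_eq_add bF s_mul_inv s_sq
  have Ec := K'a.swap_mul_eq_add cE inv_mul_s inv_sq
  have Ed := K'b.swap_mul_eq_add dE inv_mul_s inv_sq
  refine ⟨K'a, ?_, QCommute.symm aE s_mul_inv, K'c.neg_smul_right _,
    (QCommute.symm cF inv_mul_s).neg_smul_right _,
    mul_neg_smul_eq_add Ec (mul_inv_cancel₀ hq'), K'b.neg_smul_right _,
    mul_neg_smul_eq_add Fb (inv_mul_cancel₀ hq'),
    (QCommute.symm bE s_mul_inv).neg_smul_right _, K'd, QCommute.symm dF inv_mul_s, ?_⟩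
  · rw [Fa, neg_mul, smul_mul_assoc, sub_eq_add_neg]
  · rw [Ed, neg_mul, smul_mul_assoc, sub_eq_add_neg]

theorem SURightRel.leftRel_twist (hq : 0 < q) (h : SURightRel q a b c d b' c' E F K K') :
    SULeftRel q a (-((q : ℂ) • c)) (-((q : ℂ)⁻¹ • b)) d (-((q : ℂ)⁻¹ • c'))
      (-((q : ℂ) • b')) F E K' K := by
  refine ⟨h.1.twist hq.ne', ?_⟩
  obtain ⟨⟨-, -, -, -, -, -, -, -, -, -, -, -, -, -, -, -, KK', K'K, -, -, -⟩,
    Ka, Ea, Fa, Kb, Eb, Fb, Kc, Ec, Fc, Kd, Ed, Fd⟩ := h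
  have hq' : (q : ℂ) ≠ 0 := Complex.ofReal_ne_zero.2 hq.ne'
  have s_mul_inv := mul_inv_cancel₀ (ofReal_sqrt_ne_zero hq)
  have inv_mul_s := inv_mul_cancel₀ (ofReal_sqrt_ne_zero hq)
  have s_sq := ofReal_sqrt_mul_self hq.le
  have inv_sq := inv_ofReal_sqrt_mul_self hq.le
  have aK' := QCommute.swap_inv_left Ka KK' K'K
  have bK' := QCommute.swap_inv_left Kb KK' K'K
  have cK' := QCommute.swap_inv_left Kc KK' K'K
  have dK' := QCommute.swap_inv_left Kd KK' K'K
  have aE := (QCommute.symm Kb inv_mul_s).swap_mul_eq_add Ea inv_mul_s inv_sq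
  have cE := (QCommute.symm Kd inv_mul_s).swap_mul_eq_add Ec inv_mul_s inv_sq
  have bF := (QCommute.symm Ka s_mul_inv).swap_mul_eq_add Fb s_mul_inv s_sq
  have dF := (QCommute.symm Kc s_mul_inv).swap_mul_eq_add Fd s_mul_inv s_sq
  refine ⟨aK', QCommute.symm Fa inv_mul_s, ?_, cK'.neg_smul_left _,
    (QCommute.symm Fc inv_mul_s).neg_smul_left _,
    neg_smul_mul_eq_add cE (mul_inv_cancel₀ hq'), bK'.neg_smul_left _,
    neg_smul_mul_eq_add bF (inv_mul_cancel₀ hq'),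
    (QCommute.symm Eb s_mul_inv).neg_smul_left _, dK', ?_, QCommute.symm Ed s_mul_inv⟩
  · rw [aE, mul_neg, mul_smul_comm, sub_eq_add_neg]
  · rw [dF, mul_neg, mul_smul_comm, sub_eq_add_neg]

end Relations

/-- The names of the generators of the two cross product algebras. -/
inductive SUGenerator
  | a | b | c | d | bInv | cInv | E | F | K | KInv

namespace SUGenerator

/-- The family of elements indexed by generator names that lists the given ten elements. -/
def family {A : Type*} (a b c d b' c' E F K K' : A) : SUGenerator → A
  | .a => a
  | .b => b
  | .c => c
  | .d => d
  | .bInv => b'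
  | .cInv => c'
  | .E => E
  | .F => F
  | .K => K
  | .KInv => K'

/-- The substitution on families of generators that gives rise to the isomorphism `θ`. -/
noncomputable def twist {A : Type*} [Ring A] [Algebra ℂ A] (q : ℝ) (x : SUGenerator → A) :
    SUGenerator → A
  | .a => x .a
  | .b => -((q : ℂ) • x .c)
  | .c => -((q : ℂ)⁻¹ • x .b)
  | .d => x .d
  | .bInv => -((q : ℂ)⁻¹ • x .cInv)
  | .cInv => -((q : ℂ) • x .bInv)
  | .E => x .F
  | .F => x .E
  | .K => x .KInv
  | .KInv => x .K

/-- `SULeftRel` for a family of generators. -/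
def LeftRel (q : ℝ) (A : Type) [Ring A] [Algebra ℂ A] [StarRing A] (x : SUGenerator → A) : Prop :=
  SULeftRel q (x .a) (x .b) (x .c) (x .d) (x .bInv) (x .cInv) (x .E) (x .F) (x .K) (x .KInv)

/-- `SURightRel` for a family of generators. -/
def RightRel (q : ℝ) (A : Type) [Ring A] [Algebra ℂ A] [StarRing A] (x : SUGenerator → A) : Prop :=
  SURightRel q (x .a) (x .b) (x .c) (x .d) (x .bInv) (x .cInv) (x .E) (x .F) (x .K) (x .KInv)

theorem comp_family_eq_iff {A B : Type*} {φ : A → B} {a b c d b' c' E F K K' : A}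
    {y : SUGenerator → B} :
    φ ∘ family a b c d b' c' E F K K' = y ↔
      φ a = y .a ∧ φ b = y .b ∧ φ c = y .c ∧ φ d = y .d ∧ φ b' = y .bInv ∧ φ c' = y .cInv ∧
        φ E = y .E ∧ φ F = y .F ∧ φ K = y .K ∧ φ K' = y .KInv := by
  refine ⟨fun h ↦ ⟨congrFun h .a, congrFun h .b, congrFun h .c, congrFun h .d, congrFun h .bInv,
    congrFun h .cInv, congrFun h .E, congrFun h .F, congrFun h .K, congrFun h .KInv⟩, ?_⟩
  rintro ⟨ha, hb, hc, hd, hb', hc', hE, hF, hK, hK'⟩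
  funext i
  cases i <;> assumption

theorem twist_twist {A : Type*} [Ring A] [Algebra ℂ A] {q : ℝ} (hq : q ≠ 0)
    (x : SUGenerator → A) : twist q (twist q x) = x := by
  have hq' : (q : ℂ) ≠ 0 := Complex.ofReal_ne_zero.2 hq
  funext i
  cases i <;> simp only [twist, smul_neg, neg_neg, smul_inv_smul₀ hq', inv_smul_smul₀ hq']

theorem comp_twist {A B G : Type*} [Ring A] [Algebra ℂ A] [Ring B] [Algebra ℂ B]
    [FunLike G A B] [LinearMapClass G ℂ A B] (φ : G) (q : ℝ) (x : SUGenerator → A) :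
    φ ∘ twist q x = twist q (φ ∘ x) := by
  funext i
  cases i <;> simp only [twist, Function.comp_apply, map_neg, map_smul]

theorem LeftRel.rightRel_twist {A : Type} [Ring A] [Algebra ℂ A] [StarRing A] [StarModule ℂ A]
    {q : ℝ} (hq : 0 < q) {x : SUGenerator → A} (h : LeftRel q A x) : RightRel q A (twist q x) :=
  SULeftRel.rightRel_twist hq h

theorem RightRel.leftRel_twist {A : Type} [Ring A] [Algebra ℂ A] [StarRing A] [StarModule ℂ A]
    {q : ℝ} (hq : 0 < q) {x : SUGenerator → A} (h : RightRel q A x) : LeftRel q A (twist q x) :=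
  SURightRel.leftRel_twist hq h

end SUGenerator

open SUGenerator

section Universality

variable {q : ℝ} {A : Type} [Ring A] [Algebra ℂ A] [StarRing A] [StarModule ℂ A]
  {a b c d b' c' E F K K' : A}

theorem IsUniversalSULeft.isUniversalFamily (h : IsUniversalSULeft q A a b c d b' c' E F K K') :
    IsUniversalFamily (LeftRel q) (family a b c d b' c' E F K K') :=
  ⟨h.1, fun C _ _ _ _ _ hy ↦ by
    simpa only [comp_family_eq_iff] using h.2 C _ _ _ _ _ _ _ _ _ _ hy⟩

theorem IsUniversalSURight.isUniversalFamily (h : IsUniversalSURight q A a b c d b' c' E F K K') :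
    IsUniversalFamily (RightRel q) (family a b c d b' c' E F K K') :=
  ⟨h.1, fun C _ _ _ _ _ hy ↦ by
    simpa only [comp_family_eq_iff] using h.2 C _ _ _ _ _ _ _ _ _ _ hy⟩

end Universality

theorem stmt_12_general (q : ℝ) (hq0 : 0 < q) (_hq1 : q ≠ 1)
    (A : Type) [Ring A] [Algebra ℂ A] [StarRing A] [StarModule ℂ A]
    (B : Type) [Ring B] [Algebra ℂ B] [StarRing B] [StarModule ℂ B]
    (a b c d b' c' E F K K' : A) (a₁ b₁ c₁ d₁ b₁' c₁' E₁ F₁ L L' : B)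
    (hA : IsUniversalSULeft q A a b c d b' c' E F K K')
    (hB : IsUniversalSURight q B a₁ b₁ c₁ d₁ b₁' c₁' E₁ F₁ L L') :
    ∃ θ : A ≃⋆ₐ[ℂ] B,
      θ a = a₁ ∧ θ b = -((q : ℂ) • c₁) ∧ θ c = -((q : ℂ)⁻¹ • b₁) ∧ θ d = d₁ ∧
      θ E = F₁ ∧ θ F = E₁ ∧ θ K = L' ∧
      θ b' = -((q : ℂ)⁻¹ • c₁') ∧ θ c' = -((q : ℂ) • b₁') ∧ θ K' = L := by
  have hx := hA.isUniversalFamily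
  have hy := hB.isUniversalFamily
  obtain ⟨θ, hθ⟩ := hx.exists_starAlgEquiv hy (hx.1.rightRel_twist hq0) (hy.1.leftRel_twist hq0)
    (fun f hf ↦ by rw [comp_twist, hf, twist_twist hq0.ne'])
    (fun g hg ↦ by rw [comp_twist, hg, twist_twist hq0.ne'])
  obtain ⟨ha, hb, hc, hd, hb', hc', hE, hF, hK, hK'⟩ := comp_family_eq_iff.1 hθ
  exact ⟨θ, ha, hb, hc, hd, hE, hF, hK, hb', hc', hK'⟩

/-- There is a ∗-algebra isomorphism
`θ : U_q(su_{1,1}) ⋉ Ô(SU_q(1,1)) → Ô(SU_q(1,1)) ⋊ U_q(su_{1,1})` with `θ(a) = a`,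
`θ(b) = -qc`, `θ(c) = -q⁻¹b`, `θ(d) = d`, `θ(E) = F`, `θ(F) = E`, `θ(K) = K⁻¹`
(hence `θ(b⁻¹) = -q⁻¹c⁻¹`, `θ(c⁻¹) = -qb⁻¹`, `θ(K⁻¹) = K`). -/
theorem stmt_12 (q : ℝ) (hq0 : 0 < q) (hq1 : q < 1)
    (A : Type) [Ring A] [Algebra ℂ A] [StarRing A] [StarModule ℂ A]
    (B : Type) [Ring B] [Algebra ℂ B] [StarRing B] [StarModule ℂ B]
    (a b c d b' c' E F K K' : A) (a₁ b₁ c₁ d₁ b₁' c₁' E₁ F₁ L L' : B)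
    (hA : IsUniversalSULeft q A a b c d b' c' E F K K')
    (hB : IsUniversalSURight q B a₁ b₁ c₁ d₁ b₁' c₁' E₁ F₁ L L') :
    ∃ θ : A ≃⋆ₐ[ℂ] B,
      θ a = a₁ ∧ θ b = -((q : ℂ) • c₁) ∧ θ c = -((q : ℂ)⁻¹ • b₁) ∧ θ d = d₁ ∧
      θ E = F₁ ∧ θ F = E₁ ∧ θ K = L' ∧
      θ b' = -((q : ℂ)⁻¹ • c₁') ∧ θ c' = -((q : ℂ) • b₁') ∧ θ K' = L :=
  stmt_12_general q hq0 hq1.ne A B a b c d b' c' E F K K' a₁ b₁ c₁ d₁ b₁' c₁' E₁ F₁ L L' hA hB
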